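/- For every u ∈ Σ and every r ∈ (0, 1), one has π (1/2 − r²) A_u(r) ≤ H(u) + π u(r)²/(1 − r²), where A_u(r) = (1/(π r²)) ∫_{B_r} u(x)²/(1−|x|²)² dx and B_r is the open disc of radius r centered at the origin. -/

import Mathlib

/-!
The function `u` is radial, `u x = f ‖x‖`, so after integration in polar coordinates the claim is
one-dimensional. For `b s = k s² / (1 - s²)`, expanding `s (f' + b f / s)² ≥ 0` gives
`s f'² - m s f² / (1 - s²)² ≥ -(b f²)'` wherever `m ≤ 2 k - k² s²`
(`weighted_hardy_pointwise`), and integrating this over `[a, c]` leaves only boundary terms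
(`weighted_hardy`).

It is used twice. On `[0, r]` with `k = m = 1 / (2 r²)` the boundary term is exactly
`f(r)² / (2 (1 - r²))`, and `m` is the coefficient `1 + (1/2 - r²) / r²` which results from moving
the left-hand side into the Hardy functional. On `[r, 1]` with `k = m = 1` the boundary term at
`r` is nonnegative and the one at `1` vanishes because `u` has compact support in the disc.
-/

open MeasureTheory Real Filter

noncomputable section

/-- `ℝ²` as a Euclidean space. -/
abbrev E2 : Type := EuclideanSpace ℝ (Fin 2)

/-- The open unit disc in `ℝ²`. -/
def B2 : Set E2 := Metric.ball 0 1

/-- `u ∈ C_c^∞(B)`: a smooth function with compact support contained in the open unit disc. -/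
def IsTest (u : E2 → ℝ) : Prop :=
  ContDiff ℝ (⊤ : ℕ∞) u ∧ HasCompactSupport u ∧ tsupport u ⊆ B2

/-- `u ∈ Σ`: a smooth compactly supported function on the unit disc which is radially
symmetric and nonincreasing in the radius (encoded as: `‖x‖ ≤ ‖y‖ → u y ≤ u x`, which is
equivalent to radial symmetry together with monotonicity in `r`). -/
def IsSigma (u : E2 → ℝ) : Prop :=
  IsTest u ∧ ∀ x y : E2, ‖x‖ ≤ ‖y‖ → u y ≤ u x

/-- The localized Hardy functional `H_Ω(u) = ∫_Ω |∇u|² − ∫_Ω u²/(1−|x|²)²`. -/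
def HOn (Ω : Set E2) (u : E2 → ℝ) : ℝ :=
  (∫ x in Ω, ‖gradient u x‖ ^ 2) - ∫ x in Ω, (u x) ^ 2 / (1 - ‖x‖ ^ 2) ^ 2

/-- The Hardy functional `H(u) = H_B(u)`. -/
def H (u : E2 → ℝ) : ℝ := HOn B2 u

/-- The point `(r, 0) ∈ ℝ²`, used to evaluate a radial function at radius `r`. -/
def pt (r : ℝ) : E2 := EuclideanSpace.single 0 r

/-- Completing the square: the left-hand side below is `-(k s² / (1 - s²) · f²)'` when
`y = f s` and `y' = f' s`. -/
lemma weighted_hardy_pointwise {s k m y y' : ℝ} (hs : 0 ≤ s) (hs1 : s < 1)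
    (hm : m ≤ 2 * k - k ^ 2 * s ^ 2) :
    -(k * (2 * s / (1 - s ^ 2) ^ 2 * y ^ 2 + s ^ 2 / (1 - s ^ 2) * (2 * y * y')))
      ≤ s * y' ^ 2 - m * (s * (y ^ 2 / (1 - s ^ 2) ^ 2)) := by
  have hpos : 0 < 1 - s ^ 2 := by nlinarith
  have h1 : 0 ≤ s * (y' + k * s * (y / (1 - s ^ 2))) ^ 2 := by positivity
  have h2 : 0 ≤ s * ((2 * k - k ^ 2 * s ^ 2 - m) * (y / (1 - s ^ 2)) ^ 2) :=
    mul_nonneg hs (mul_nonneg (by linarith) (sq_nonneg _))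
  have key : s * y' ^ 2 - m * (s * (y ^ 2 / (1 - s ^ 2) ^ 2))
      + k * (2 * s / (1 - s ^ 2) ^ 2 * y ^ 2 + s ^ 2 / (1 - s ^ 2) * (2 * y * y'))
      = s * (y' + k * s * (y / (1 - s ^ 2))) ^ 2
        + s * ((2 * k - k ^ 2 * s ^ 2 - m) * (y / (1 - s ^ 2)) ^ 2) := by
    field_simp
    ring
  linarith

/-- One-dimensional Hardy inequality on `[a, c]` with boundary terms. -/
lemma weighted_hardy {f : ℝ → ℝ} (hf : ContDiff ℝ 1 f) {a c k m : ℝ}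
    (ha : 0 ≤ a) (hac : a ≤ c) (hc : c < 1)
    (hm : ∀ s ∈ Set.Icc a c, m ≤ 2 * k - k ^ 2 * s ^ 2) :
    k * (a ^ 2 / (1 - a ^ 2)) * f a ^ 2 - k * (c ^ 2 / (1 - c ^ 2)) * f c ^ 2
      ≤ (∫ s in a..c, s * deriv f s ^ 2)
        - m * ∫ s in a..c, s * (f s ^ 2 / (1 - s ^ 2) ^ 2) := by
  have hne : ∀ s ∈ Set.uIcc a c, 1 - s ^ 2 ≠ 0 := by
    intro s hs
    rw [Set.uIcc_of_le hac] at hs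
    have h0 : 0 ≤ s := ha.trans hs.1
    have h1 : s < 1 := hs.2.trans_lt hc
    have : 0 < 1 - s ^ 2 := by nlinarith
    exact this.ne'
  have hfc : Continuous f := hf.continuous
  have hdc : Continuous (deriv f) := hf.continuous_deriv le_rfl
  have hder : ∀ s ∈ Set.uIcc a c, HasDerivAt (fun s => -(k * (s ^ 2 / (1 - s ^ 2) * f s ^ 2)))
      (-(k * (2 * s / (1 - s ^ 2) ^ 2 * f s ^ 2
        + s ^ 2 / (1 - s ^ 2) * (2 * f s * deriv f s)))) s := by
    intro s hs
    have h1 : HasDerivAt f (deriv f s) s := (hf.differentiable one_ne_zero s).hasDerivAt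
    have h2 : HasDerivAt (fun s : ℝ => s ^ 2) (2 * s) s := by
      simpa using hasDerivAt_pow 2 s
    have h3 := (((h2.div (h2.const_sub 1) (hne s hs)).mul (h1.pow 2)).const_mul k).neg
    refine h3.congr_deriv ?_
    have := hne s hs
    simp only [Pi.pow_apply, Pi.div_apply, Nat.cast_ofNat, Nat.add_one_sub_one, pow_one]
    field_simp
    ring
  have hcont : ContinuousOn (fun s => -(k * (2 * s / (1 - s ^ 2) ^ 2 * f s ^ 2
        + s ^ 2 / (1 - s ^ 2) * (2 * f s * deriv f s)))) (Set.uIcc a c) := by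
    have h' : ∀ s ∈ Set.uIcc a c, (1 - s ^ 2) ^ 2 ≠ 0 := fun s hs => pow_ne_zero _ (hne s hs)
    refine (continuousOn_const.mul (ContinuousOn.add (ContinuousOn.mul
      (ContinuousOn.div (by fun_prop) (by fun_prop) h') (by fun_prop))
      (ContinuousOn.mul (ContinuousOn.div (by fun_prop) (by fun_prop) hne) (by fun_prop)))).neg
  have hcont1 : ContinuousOn (fun s => s * deriv f s ^ 2) (Set.uIcc a c) := by fun_prop
  have hcont2 : ContinuousOn (fun s => m * (s * (f s ^ 2 / (1 - s ^ 2) ^ 2)))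
      (Set.uIcc a c) :=
    continuousOn_const.mul (continuousOn_id.mul (ContinuousOn.div (by fun_prop) (by fun_prop)
      fun s hs => pow_ne_zero _ (hne s hs)))
  have hFTC := intervalIntegral.integral_eq_sub_of_hasDerivAt hder hcont.intervalIntegrable
  rw [← intervalIntegral.integral_const_mul,
    ← intervalIntegral.integral_sub hcont1.intervalIntegrable hcont2.intervalIntegrable]
  have hmono := intervalIntegral.integral_mono_on (μ := volume) hac hcont.intervalIntegrable
    (hcont1.intervalIntegrable.sub hcont2.intervalIntegrable) (fun s hs =>
      weighted_hardy_pointwise (y := f s) (y' := deriv f s) (ha.trans hs.1)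
        (hs.2.trans_lt hc) (hm s hs))
  rw [hFTC] at hmono
  linarith

lemma setIntegral_ball_radial (g : ℝ → ℝ) {R : ℝ} (hR : 0 ≤ R) :
    ∫ x in Metric.ball (0 : E2) R, g ‖x‖ = 2 * π * ∫ s in (0 : ℝ)..R, s * g s := by
  have h1 : ∫ x in Metric.ball (0 : E2) R, g ‖x‖
      = ∫ x : E2, (Set.Iio R).indicator g ‖x‖ := by
    rw [← integral_indicator Metric.isOpen_ball.measurableSet]
    refine integral_congr_ae (Eventually.of_forall fun x => ?_)
    simp [Set.indicator]
  have hv : (volume : Measure E2).real (Metric.ball 0 1) = π := by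
    simp [Measure.real, E2, pi_nonneg]
  rw [h1, integral_fun_norm_addHaar volume, hv, intervalIntegral.integral_of_le hR,
    integral_Ioc_eq_integral_Ioo]
  have h2 : ∀ y : ℝ, y ^ (Module.finrank ℝ E2 - 1) • (Set.Iio R).indicator g y
      = (Set.Iio R).indicator (fun s => s * g s) y := by
    intro y
    by_cases hy : y < R <;> simp [hy, E2]
  simp only [h2]
  rw [setIntegral_indicator measurableSet_Iio, Set.Ioi_inter_Iio]
  simp [E2, mul_assoc]

lemma norm_pt (s : ℝ) : ‖pt s‖ = |s| := by simp [pt]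

lemma contDiff_pt : ContDiff ℝ (⊤ : ℕ∞) pt := by
  have : pt = fun s : ℝ => s • (EuclideanSpace.single 0 1 : E2) := by
    ext s i
    simp [pt]
  rw [this]
  fun_prop

lemma IsSigma.eq_profile {u : E2 → ℝ} (hu : IsSigma u) (x : E2) : u x = u (pt ‖x‖) :=
  le_antisymm (hu.2 _ _ (by simp [norm_pt])) (hu.2 _ _ (by simp [norm_pt]))

/-- The gradient dominates the radial derivative. -/
lemma IsSigma.deriv_sq_le {u : E2 → ℝ} (hu : IsSigma u) (x : E2) (hx : x ≠ 0) :
    deriv (fun s => u (pt s)) ‖x‖ ^ 2 ≤ ‖gradient u x‖ ^ 2 := by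
  have hn : 0 < ‖x‖ := norm_pos_iff.2 hx
  set e : E2 := ‖x‖⁻¹ • x with he
  have hen : ‖e‖ = 1 := by simp [he, norm_smul, hn.ne']
  have hxe : ‖x‖ • e = x := by simp [he, smul_smul, hn.ne']
  have hd : DifferentiableAt ℝ u x := hu.1.1.differentiable (by simp) x
  have hev : (fun s => u (pt s)) =ᶠ[nhds ‖x‖] fun s : ℝ => u (s • e) := by
    filter_upwards [lt_mem_nhds hn] with s hs
    rw [hu.eq_profile (s • e), norm_smul, hen, mul_one, Real.norm_eq_abs, abs_of_pos hs]
  have hline : HasDerivAt (fun s : ℝ => s • e) e ‖x‖ := by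
    simpa using (hasDerivAt_id ‖x‖).smul_const e
  have hder : HasDerivAt (fun s : ℝ => u (s • e)) (fderiv ℝ u x e) ‖x‖ := by
    have h := hd.hasFDerivAt
    rw [← hxe] at h
    have h2 := h.comp_hasDerivAt ‖x‖ hline
    rw [hxe] at h2
    exact h2
  rw [hev.deriv_eq, hder.deriv]
  have hg : ‖gradient u x‖ = ‖fderiv ℝ u x‖ := by simp [gradient]
  rw [hg, ← sq_abs]
  have := (fderiv ℝ u x).le_opNorm e
  rw [hen, mul_one, Real.norm_eq_abs] at this
  gcongr

/-- Lemma 5: for `u ∈ Σ` and `r ∈ (0, 1)`,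
`π(1/2 − r²) A_u(r) ≤ H(u) + π u(r)²/(1 − r²)`, where
`A_u(r) = (1/(πr²)) ∫_{B_r} u²/(1−|x|²)²`. -/
theorem average_potential_bound :
    ∀ u : E2 → ℝ, IsSigma u → ∀ r : ℝ, 0 < r → r < 1 →
      π * (1 / 2 - r ^ 2) *
          ((1 / (π * r ^ 2)) * ∫ x in Metric.ball (0 : E2) r, (u x) ^ 2 / (1 - ‖x‖ ^ 2) ^ 2)
        ≤ H u + π * (u (pt r)) ^ 2 / (1 - r ^ 2) := by
  intro u hu r hr0 hr1
  obtain ⟨⟨hsm, -, hsub⟩, -⟩ := id hu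
  obtain ⟨ρ', hρ', hsub'⟩ := exists_lt_subset_ball (isClosed_tsupport u) hsub
  -- The support lies in a disc of radius `ρ < 1`, away from the singularity of the weight.
  obtain ⟨ρ, hrρ, hρ1, hρ'ρ⟩ : ∃ ρ, r < ρ ∧ ρ < 1 ∧ ρ' ≤ ρ :=
    ⟨max ρ' ((1 + r) / 2), lt_max_of_lt_right (by linarith), max_lt hρ' (by linarith),
      le_max_left _ _⟩
  have hρ0 : 0 < ρ := hr0.trans hrρ
  have hzero : ∀ x : E2, ρ ≤ ‖x‖ → u x = 0 := by
    intro x hx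
    by_contra h
    have := hsub' (subset_tsupport u h)
    rw [mem_ball_zero_iff] at this
    linarith
  set f : ℝ → ℝ := fun s => u (pt s) with hf_def
  have hf : ContDiff ℝ 1 f := (hsm.comp contDiff_pt).of_le (by simp)
  have hfρ : f ρ = 0 := hzero _ (by rw [norm_pt, abs_of_pos hρ0])
  have hdc : Continuous (deriv f) := hf.continuous_deriv le_rfl
  have hballsub : Metric.ball (0 : E2) ρ ⊆ B2 := Metric.ball_subset_ball hρ1.le
  have hVrad : ∀ R, 0 ≤ R → ∫ x in Metric.ball (0 : E2) R, (u x) ^ 2 / (1 - ‖x‖ ^ 2) ^ 2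
      = 2 * π * ∫ s in (0 : ℝ)..R, s * (f s ^ 2 / (1 - s ^ 2) ^ 2) := by
    intro R hR
    rw [← setIntegral_ball_radial (fun s => f s ^ 2 / (1 - s ^ 2) ^ 2) hR]
    simp only [hf_def, ← hu.eq_profile]
  have hV : ∫ x in B2, (u x) ^ 2 / (1 - ‖x‖ ^ 2) ^ 2
      = 2 * π * ∫ s in (0 : ℝ)..ρ, s * (f s ^ 2 / (1 - s ^ 2) ^ 2) := by
    rw [← hVrad ρ hρ0.le]
    refine setIntegral_eq_of_subset_of_forall_sdiff_eq_zero Metric.isOpen_ball.measurableSet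
      hballsub fun x hx => ?_
    have : ρ ≤ ‖x‖ := by simpa using hx.2
    simp [hzero x this]
  have hgc : Continuous fun x => ‖gradient u x‖ ^ 2 := by
    have h1 : Continuous (fderiv ℝ u) := hsm.continuous_fderiv (by simp)
    unfold gradient
    fun_prop
  have hint : IntegrableOn (fun x => ‖gradient u x‖ ^ 2) B2 :=
    (hgc.locallyIntegrable.integrableOn_isCompact (isCompact_closedBall (0 : E2) 1)).mono_set
      Metric.ball_subset_closedBall
  have hD : 2 * π * (∫ s in (0 : ℝ)..ρ, s * deriv f s ^ 2) ≤ ∫ x in B2, ‖gradient u x‖ ^ 2 := by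
    rw [← setIntegral_ball_radial (fun s => deriv f s ^ 2) hρ0.le]
    have hc : Continuous fun x : E2 => deriv f ‖x‖ ^ 2 := by fun_prop
    calc ∫ x in Metric.ball (0 : E2) ρ, deriv f ‖x‖ ^ 2
        ≤ ∫ x in Metric.ball (0 : E2) ρ, ‖gradient u x‖ ^ 2 := by
          refine setIntegral_mono_ae ((hc.locallyIntegrable.integrableOn_isCompact
            (isCompact_closedBall (0 : E2) ρ)).mono_set Metric.ball_subset_closedBall)
            (hint.mono_set hballsub) ?_
          have h0 : ∀ᵐ x : E2, x ≠ 0 := by simp [ae_iff]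
          filter_upwards [h0] with x hx using hu.deriv_sq_le x hx
      _ ≤ ∫ x in B2, ‖gradient u x‖ ^ 2 :=
          setIntegral_mono_set hint (Eventually.of_forall fun x => by positivity)
            hballsub.eventuallyLE
  have hr2 : 0 < r ^ 2 := by positivity
  have h1r : 0 < 1 - r ^ 2 := by nlinarith
  -- `k = 1 / (2 r²)` makes the boundary term at `r` equal to `f(r)² / (2 (1 - r²))`.
  have hin := weighted_hardy hf (k := 1 / (2 * r ^ 2)) (m := 1 / (2 * r ^ 2)) le_rfl hr0.le hr1 (by
    intro s hs
    have hs2 : s ^ 2 ≤ r ^ 2 := by gcongr; exacts [hs.1, hs.2]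
    have hk : 0 ≤ 1 / (2 * r ^ 2) := by positivity
    have hks : 1 / (2 * r ^ 2) * s ^ 2 ≤ 1 := by
      rw [div_mul_eq_mul_div, div_le_one (by positivity)]
      linarith
    nlinarith)
  have hout := weighted_hardy hf (k := 1) (m := 1) hr0.le hrρ.le hρ1 (by
    intro s hs
    have : s ≤ 1 := hs.2.trans hρ1.le
    have : 0 ≤ s := hr0.le.trans hs.1
    nlinarith)
  rw [hfρ] at hout
  have hbd : 0 ≤ r ^ 2 / (1 - r ^ 2) * f r ^ 2 := by positivity
  have hbd' : 1 / (2 * r ^ 2) * (r ^ 2 / (1 - r ^ 2)) * f r ^ 2 = f r ^ 2 / (1 - r ^ 2) / 2 := by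
    field_simp
  have hIV : ∀ a c : ℝ, 0 ≤ a → a ≤ c → c < 1 →
      IntervalIntegrable (fun s => s * (f s ^ 2 / (1 - s ^ 2) ^ 2)) volume a c := by
    intro a c ha hac hc
    have hfc := hf.continuous
    refine ContinuousOn.intervalIntegrable (continuousOn_id.mul (ContinuousOn.div (by fun_prop)
      (by fun_prop) fun s hs => pow_ne_zero _ ?_))
    rw [Set.uIcc_of_le hac] at hs
    nlinarith [hs.1, hs.2]
  have hID : ∀ a c : ℝ, IntervalIntegrable (fun s => s * deriv f s ^ 2) volume a c := fun a c =>
    Continuous.intervalIntegrable (by fun_prop) _ _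
  have hsplitV := intervalIntegral.integral_add_adjacent_intervals
    (hIV 0 r le_rfl hr0.le hr1) (hIV r ρ hr0.le hrρ.le hρ1)
  have hsplitD := intervalIntegral.integral_add_adjacent_intervals (hID 0 r) (hID r ρ)
  have hVr := hVrad r hr0.le
  have hπ := pi_pos
  unfold H HOn
  rw [hV, hVr]
  rw [← hsplitD] at hD
  rw [← hsplitV]
  set D1 := ∫ s in (0 : ℝ)..r, s * deriv f s ^ 2
  set D2 := ∫ s in r..ρ, s * deriv f s ^ 2
  set V1 := ∫ s in (0 : ℝ)..r, s * (f s ^ 2 / (1 - s ^ 2) ^ 2)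
  set V2 := ∫ s in r..ρ, s * (f s ^ 2 / (1 - s ^ 2) ^ 2)
  have hsum : 1 / (2 * r ^ 2) * V1 - f r ^ 2 / (1 - r ^ 2) / 2 ≤ D1 + D2 - V2 := by
    rw [hbd'] at hin
    simp only [ne_eq, OfNat.ofNat_ne_zero, not_false_eq_true, zero_pow, zero_div, mul_zero,
      zero_mul, one_mul, sub_zero] at hin hout
    linarith
  have hscaled := mul_le_mul_of_nonneg_left hsum (by positivity : 0 ≤ 2 * π)
  have hL : π * (1 / 2 - r ^ 2) * (1 / (π * r ^ 2) * (2 * π * V1))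
      = 2 * π * (1 / (2 * r ^ 2) * V1) - 2 * π * V1 := by
    field_simp
  have hR : π * f r ^ 2 / (1 - r ^ 2) = 2 * π * (f r ^ 2 / (1 - r ^ 2) / 2) := by ring
  change _ ≤ _ + π * f r ^ 2 / (1 - r ^ 2)
  rw [hL, hR]
  linarith
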